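/- arXiv:2311.12178 — 4 statements merged into one kernel-verified Lean document; each statement's English description precedes it below -/
import Mathlib

section
/- Let (L,[-,-,-]) be a ternary Leibniz algebra over a field K and (V,λ,μ,ρ) a representation of L on a vector space V. Then the direct sum L ⊕ V is a ternary Leibniz algebra with the bracket [x+u₁, y+u₂, z+u₃] := [x,y,z] + ρ(y,z)(u₁) + μ(x,z)(u₂) + λ(x,y)(u₃), for x,y,z ∈ L and u₁,u₂,u₃ ∈ V. -/
variable {K : Type*} [Field K] {L : Type*} [AddCommGroup L] [Module K L]
variable {V : Type*} [AddCommGroup V] [Module K V]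

/-- The (right) ternary Leibniz identity for a ternary bracket. -/
def TernaryLeibnizId {A : Type*} [AddCommGroup A] (b : A → A → A → A) : Prop :=
  ∀ x y z t u : A,
    b (b x y z) t u = b x y (b z t u) + b x (b y t u) z + b (b x t u) y z

/-- A representation `(V, λ, μ, ρ)` of a ternary Leibniz algebra `(L, t)` on `V`. -/
def IsTernaryRep (t : L → L → L → L)
    (lam mu rho : L → L → Module.End K V) : Prop :=
  (∀ x y z w : L,
    lam (t x y z) w = lam x y * lam z w + mu x z * lam y w + rho y z * lam x w) ∧
  (∀ x y z w : L,
    mu (t x y z) w = lam x y * mu z w + mu x z * mu y w + rho y z * mu x w) ∧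
  (∀ x y z w : L,
    rho z w * lam x y = lam x y * rho z w + lam x (t y z w) + lam (t x z w) y) ∧
  (∀ x y z w : L,
    rho z w * mu x y = mu x (t y z w) + mu x y * rho z w + mu (t x z w) y) ∧
  (∀ x y z w : L,
    rho z w * rho x y = rho x (t y z w) + rho (t x z w) y + rho x y * rho z w)

/-- Given a representation `(V, λ, μ, ρ)` of a ternary Leibniz algebra `(L, [-,-,-])`, the
direct sum `L ⊕ V` is a ternary Leibniz algebra with bracket
`[x+u₁, y+u₂, z+u₃] := [x,y,z] + ρ(y,z)(u₁) + μ(x,z)(u₂) + λ(x,y)(u₃)`. -/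
theorem semidirect_product_ternaryLeibniz (t : L →ₗ[K] L →ₗ[K] L →ₗ[K] L)
    (ht : TernaryLeibnizId fun x y z => t x y z)
    (lam mu rho : L →ₗ[K] L →ₗ[K] Module.End K V)
    (hrep : IsTernaryRep (fun x y z => t x y z)
      (fun x y => lam x y) (fun x y => mu x y) (fun x y => rho x y)) :
    TernaryLeibnizId fun p q r : L × V =>
      (t p.1 q.1 r.1, rho q.1 r.1 p.2 + mu p.1 r.1 q.2 + lam p.1 q.1 r.2) := by
  obtain ⟨h1, h2, h3, h4, h5⟩ := hrep
  rintro ⟨x, a⟩ ⟨y, b⟩ ⟨z, c⟩ ⟨w, d⟩ ⟨s, e⟩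
  have k0 := ht x y z w s
  have k1 := LinearMap.congr_fun (h1 x y z w) e
  have k2 := LinearMap.congr_fun (h2 x y z s) d
  have k3 := LinearMap.congr_fun (h3 x y w s) c
  have k4 := LinearMap.congr_fun (h4 x z w s) b
  have k5 := LinearMap.congr_fun (h5 y z w s) a
  simp only [LinearMap.add_apply, Module.End.mul_apply] at k0 k1 k2 k3 k4 k5
  refine Prod.ext k0 ?_
  simp only [Prod.snd_add, map_add]
  rw [k1, k2, k3, k4, k5]
  abel
end

section
/- Let (L,[-,-,-]) be a ternary Leibniz algebra over a field K, (V,λ,μ,ρ) a representation of L on V, and (N,T) a Nijenhuis pair, i.e. N : L → L is a Nijenhuis operator on L and T : V → V is a linear map satisfying, for all x,y ∈ L: λ(N(x),N(y))∘T = T∘(λ(N(x),N(y)) + λ(N(x),y)∘T + λ(x,N(y))∘T) − T²∘(λ(x,y)∘T + λ(N(x),y) + λ(x,N(y))) + T³∘λ(x,y), and the analogous identities with λ replaced by μ and by ρ. Then the linear map N ⊕ T : L ⊕ V → L ⊕ V, (x,u) ↦ (N(x),T(u)), is a Nijenhuis operator on the semidirect-product ternary Leibniz algebra L ⊕ V whose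 bracket is [x+u₁, y+u₂, z+u₃] := [x,y,z] + ρ(y,z)(u₁) + μ(x,z)(u₂) + λ(x,y)(u₃). -/
variable {K : Type*} [Field K] {L : Type*} [AddCommGroup L] [Module K L]
variable {V : Type*} [AddCommGroup V] [Module K V]

/-- A Nijenhuis operator on a ternary Leibniz algebra. -/
def IsTernaryNijenhuis {A : Type*} [AddCommGroup A] (t : A → A → A → A) (N : A → A) : Prop :=
  ∀ x y z : A,
    t (N x) (N y) (N z) =
      N (t (N x) (N y) z + t (N x) y (N z) + t x (N y) (N z)) -
        N (N (t (N x) y z + t x (N y) z + t x y (N z))) +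
        N (N (N (t x y z)))

/-- If `(N, T)` is a Nijenhuis pair on a ternary Leibniz algebra `(L, [-,-,-])` with a
representation `(V, λ, μ, ρ)`, then `N ⊕ T` is a Nijenhuis operator on the semidirect-product
ternary Leibniz algebra `L ⊕ V`. -/
theorem nijenhuis_pair_semidirect (t : L →ₗ[K] L →ₗ[K] L →ₗ[K] L)
    (ht : TernaryLeibnizId fun x y z => t x y z)
    (lam mu rho : L →ₗ[K] L →ₗ[K] Module.End K V)
    (hrep : IsTernaryRep (fun x y z => t x y z)
      (fun x y => lam x y) (fun x y => mu x y) (fun x y => rho x y))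
    (N : L →ₗ[K] L) (T : Module.End K V)
    (hN : IsTernaryNijenhuis (fun x y z => t x y z) (fun x => N x))
    (hTlam : ∀ x y : L,
      lam (N x) (N y) * T =
        T * (lam (N x) (N y) + lam (N x) y * T + lam x (N y) * T) -
          T ^ 2 * (lam x y * T + lam (N x) y + lam x (N y)) + T ^ 3 * lam x y)
    (hTmu : ∀ x y : L,
      mu (N x) (N y) * T =
        T * (mu (N x) (N y) + mu (N x) y * T + mu x (N y) * T) -
          T ^ 2 * (mu x y * T + mu (N x) y + mu x (N y)) + T ^ 3 * mu x y)
    (hTrho : ∀ x y : L,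
      rho (N x) (N y) * T =
        T * (rho (N x) (N y) + rho (N x) y * T + rho x (N y) * T) -
          T ^ 2 * (rho x y * T + rho (N x) y + rho x (N y)) + T ^ 3 * rho x y) :
    IsTernaryNijenhuis
      (fun p q r : L × V =>
        (t p.1 q.1 r.1, rho q.1 r.1 p.2 + mu p.1 r.1 q.2 + lam p.1 q.1 r.2))
      (fun p : L × V => (N p.1, T p.2)) := by
  rintro ⟨x, u⟩ ⟨y, v⟩ ⟨z, w⟩
  have h1 := LinearMap.congr_fun (hTrho y z) u
  have h2 := LinearMap.congr_fun (hTmu x z) v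
  have h3 := LinearMap.congr_fun (hTlam x y) w
  simp only [pow_succ, pow_zero, one_mul, Module.End.mul_apply, LinearMap.add_apply,
    LinearMap.sub_apply, map_add] at h1 h2 h3
  refine Prod.ext ?_ ?_
  · exact hN x y z
  · simp only [Prod.snd_add, Prod.snd_sub, Prod.fst_add, map_add]
    rw [h1, h2, h3]
    abel
end

section
/- Let (L,[-,-,-]) be a ternary Leibniz algebra over a field K, (V,λ,μ,ρ) a representation of L on V, and T : V → L an O-operator, i.e. a linear map satisfying [T(u),T(v),T(w)] = T(λ(T(u),T(v))w + μ(T(u),T(w))v + ρ(T(v),T(w))u) for all u,v,w ∈ V. Then the bracket [u₁,u₂,u₃]_T := λ(T(u₁),T(u₂))(u₃) + μ(T(u₁),T(u₃))(u₂) + ρ(T(u₂),T(u₃))(u₁) makes V into a ternary Leibniz algebra. -/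
variable {K : Type*} [Field K] {L : Type*} [AddCommGroup L] [Module K L]
variable {V : Type*} [AddCommGroup V] [Module K V]

/-- If `T : V → L` is an `O`-operator on a ternary Leibniz algebra `(L, [-,-,-])` with
respect to a representation `(V, λ, μ, ρ)`, then
`[u₁,u₂,u₃]_T := λ(T(u₁),T(u₂))(u₃) + μ(T(u₁),T(u₃))(u₂) + ρ(T(u₂),T(u₃))(u₁)` makes `V`
into a ternary Leibniz algebra. -/
theorem oOperator_ternaryLeibniz (t : L →ₗ[K] L →ₗ[K] L →ₗ[K] L)
    (ht : TernaryLeibnizId fun x y z => t x y z)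
    (lam mu rho : L →ₗ[K] L →ₗ[K] Module.End K V)
    (hrep : IsTernaryRep (fun x y z => t x y z)
      (fun x y => lam x y) (fun x y => mu x y) (fun x y => rho x y))
    (T : V →ₗ[K] L)
    (hT : ∀ u v w : V,
      t (T u) (T v) (T w) =
        T (lam (T u) (T v) w + mu (T u) (T w) v + rho (T v) (T w) u)) :
    TernaryLeibnizId fun u v w : V =>
      lam (T u) (T v) w + mu (T u) (T w) v + rho (T v) (T w) u := by
  obtain ⟨h1, h2, h3, h4, h5⟩ := hrep
  intro x y z s u
  have e1 := LinearMap.congr_fun (h1 (T x) (T y) (T z) (T s)) u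
  have e2 := LinearMap.congr_fun (h2 (T x) (T y) (T z) (T u)) s
  have e3 := LinearMap.congr_fun (h3 (T x) (T y) (T s) (T u)) z
  have e4 := LinearMap.congr_fun (h4 (T x) (T z) (T s) (T u)) y
  have e5 := LinearMap.congr_fun (h5 (T y) (T z) (T s) (T u)) x
  simp only [LinearMap.add_apply, Module.End.mul_apply] at e1 e2 e3 e4 e5
  simp only [← hT]
  simp only [map_add]
  rw [e1, e2, e3, e4, e5]
  abel
end

section
/- Let (L,[-,-,-]) be a ternary Leibniz algebra over a field K, (M,l₁,l₂,l₃) a bimodule over L, and ω : L × L × L → M a trilinear 2-cocycle, i.e. l₁(ω(x,y,z),t,u) + ω([x,y,z],t,u) = l₃(x,y,ω(z,t,u)) + l₂(x,ω(y,t,u),z) + l₁(ω(x,t,u),y,z) + ω(x,y,[z,t,u]) + ω(x,[y,t,u],z) + ω([x,t,u],y,z) for all x,y,z,t,u ∈ L. Then L ⊕ M is a ternary Leibniz algebra with the bracket [x+m₁, y+m₂, z+m₃]_ω := [x,y,z] + l₁(m₁,y,z) + l₂(x,m₂,z) + l₃(x,y,m₃) + ω(x,y,z). Moreover the brackets [-,-,-]_ω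 and [-,-,-]_0 (the bracket obtained with the zero cocycle in place of ω) are compatible ternary Leibniz brackets on L ⊕ M. -/
variable {K : Type*} [Field K] {L : Type*} [AddCommGroup L] [Module K L]
variable {M : Type*} [AddCommGroup M] [Module K M]

/-- Compatibility of two ternary brackets. -/
def TernaryCompat {A : Type*} [AddCommGroup A] (b₁ b₂ : A → A → A → A) : Prop :=
  ∀ x y z t u : A,
    b₂ (b₁ x y z) t u + b₁ (b₂ x y z) t u =
      b₂ x y (b₁ z t u) + b₁ x y (b₂ z t u) + b₂ x (b₁ y t u) z + b₁ x (b₂ y t u) z +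
        b₂ (b₁ x t u) y z + b₁ (b₂ x t u) y z

/-- A bimodule `(M, l₁, l₂, l₃)` over a ternary Leibniz algebra `(L, t)`. -/
def IsTernaryBimodule (t : L → L → L → L)
    (l₁ : M → L → L → M) (l₂ : L → M → L → M) (l₃ : L → L → M → M) : Prop :=
  (∀ (x y z w : L) (m : M),
    l₁ (l₁ m x y) z w = l₁ m x (t y z w) + l₁ m (t x z w) y + l₁ (l₁ m z w) x y) ∧
  (∀ (x y z w : L) (m : M),
    l₁ (l₂ x m y) z w = l₂ x m (t y z w) + l₂ x (l₁ m z w) y + l₂ (t x z w) m y) ∧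
  (∀ (x y z w : L) (m : M),
    l₁ (l₃ x y m) z w = l₃ x y (l₁ m z w) + l₃ x (t y z w) m + l₃ (t x z w) y m) ∧
  (∀ (x y z w : L) (m : M),
    l₂ (t x y z) m w = l₃ x y (l₂ z m w) + l₂ x (l₂ y m w) z + l₁ (l₂ x m w) y z) ∧
  (∀ (x y z w : L) (m : M),
    l₃ (t x y z) w m = l₃ x y (l₃ z w m) + l₂ x (l₃ y w m) z + l₁ (l₃ x w m) y z)

/-- Given a bimodule `(M, l₁, l₂, l₃)` over a ternary Leibniz algebra `(L, [-,-,-])` and a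
trilinear `2`-cocycle `ω : L × L × L → M`, the direct sum `L ⊕ M` is a ternary Leibniz
algebra with the bracket
`[x+m₁, y+m₂, z+m₃]_ω := [x,y,z] + l₁(m₁,y,z) + l₂(x,m₂,z) + l₃(x,y,m₃) + ω(x,y,z)`;
moreover `[-,-,-]_ω` and `[-,-,-]_0` are compatible ternary Leibniz brackets on `L ⊕ M`. -/
theorem cocycle_extension_ternaryLeibniz (t : L →ₗ[K] L →ₗ[K] L →ₗ[K] L)
    (ht : TernaryLeibnizId fun x y z => t x y z)
    (l₁ : M →ₗ[K] L →ₗ[K] L →ₗ[K] M) (l₂ : L →ₗ[K] M →ₗ[K] L →ₗ[K] M)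
    (l₃ : L →ₗ[K] L →ₗ[K] M →ₗ[K] M)
    (hmod : IsTernaryBimodule (fun x y z => t x y z)
      (fun m x y => l₁ m x y) (fun x m y => l₂ x m y) (fun x y m => l₃ x y m))
    (ω : L →ₗ[K] L →ₗ[K] L →ₗ[K] M)
    (hω : ∀ x y z w u : L,
      l₁ (ω x y z) w u + ω (t x y z) w u =
        l₃ x y (ω z w u) + l₂ x (ω y w u) z + l₁ (ω x w u) y z +
          ω x y (t z w u) + ω x (t y w u) z + ω (t x w u) y z) :
    TernaryLeibnizId (fun p q r : L × M =>
        (t p.1 q.1 r.1,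
          l₁ p.2 q.1 r.1 + l₂ p.1 q.2 r.1 + l₃ p.1 q.1 r.2 + ω p.1 q.1 r.1)) ∧
      TernaryLeibnizId (fun p q r : L × M =>
        (t p.1 q.1 r.1, l₁ p.2 q.1 r.1 + l₂ p.1 q.2 r.1 + l₃ p.1 q.1 r.2)) ∧
      TernaryCompat
        (fun p q r : L × M =>
          (t p.1 q.1 r.1,
            l₁ p.2 q.1 r.1 + l₂ p.1 q.2 r.1 + l₃ p.1 q.1 r.2 + ω p.1 q.1 r.1))
        (fun p q r : L × M =>
          (t p.1 q.1 r.1, l₁ p.2 q.1 r.1 + l₂ p.1 q.2 r.1 + l₃ p.1 q.1 r.2)) := by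
  obtain ⟨h1, h2, h3, h4, h5⟩ := hmod
  unfold TernaryLeibnizId at ht
  beta_reduce at ht h1 h2 h3 h4 h5
  refine ⟨?_, ?_, ?_⟩
  · rintro ⟨x, a⟩ ⟨y, b⟩ ⟨z, c⟩ ⟨w, d⟩ ⟨u, e⟩
    refine Prod.ext (ht x y z w u) ?_
    simp only [map_add, LinearMap.add_apply, Prod.snd_add]
    linear_combination (norm := module) h1 y z w u a + h2 x z w u b + h3 x y w u c + h4 x y z u d
      + h5 x y z w e + hω x y z w u
  · rintro ⟨x, a⟩ ⟨y, b⟩ ⟨z, c⟩ ⟨w, d⟩ ⟨u, e⟩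
    refine Prod.ext (ht x y z w u) ?_
    simp only [map_add, LinearMap.add_apply, Prod.snd_add]
    linear_combination (norm := module) h1 y z w u a + h2 x z w u b + h3 x y w u c + h4 x y z u d
      + h5 x y z w e
  · rintro ⟨x, a⟩ ⟨y, b⟩ ⟨z, c⟩ ⟨w, d⟩ ⟨u, e⟩
    refine Prod.ext ?_ ?_
    · simp only [Prod.fst_add]
      rw [ht x y z w u]
      abel
    · simp only [map_add, LinearMap.add_apply, Prod.snd_add]
      linear_combination (norm := module) (2:ℕ) • h1 y z w u a + (2:ℕ) • h2 x z w u b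
        + (2:ℕ) • h3 x y w u c + (2:ℕ) • h4 x y z u d + (2:ℕ) • h5 x y z w e + hω x y z w u
end
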